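/- Backward simulation of apply actions. Let s be a state of the compiled task P_Λ that encodes the action model Ξ' and the world state w (i.e., s ∩ F = w). If the ground STRIPS action ξ'(ω) is applicable in w (pre(ξ'(ω)) ⊆ w), then the action apply_{ξ,ω} is applicable in s, and the successor state θ(s, apply_{ξ,ω}) encodes the same action model Ξ' and the world state θ(w, ξ'(ω)) = (w \ del(ξ'(ω))) ∪ add(ξ'(ω)). -/

import Mathlib

/-! The effects of `apply_{ξ,ω}` mention, besides `mode_prog`, only world fluents. So the
successor state agrees with the old one on the model fluents, and the same model is encoded; on
world fluents it deletes (adds) exactly the instances `f[ω]` of those `f` with `del_f(ξ)` (`add_f(ξ)`)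
in the state, which are the elements of `del(ξ'(ω))` (`add(ξ'(ω))`) because the state encodes the
model. Additions prevail over deletions in both semantics, so the two successors match. -/

namespace PlanLearn

/-! ## STRIPS planning -/

/-- A STRIPS action over a set of fluents `F`: preconditions, positive effects, negative effects. -/
structure StripsAction (F : Type*) where
  pre : Set F
  add : Set F
  del : Set F

/-- A STRIPS action is applicable in a state iff its preconditions hold. -/
def StripsAction.Applicable {F : Type*} (a : StripsAction F) (s : Set F) : Prop :=
  a.pre ⊆ s

/-- Successor state of a STRIPS action: `θ(s,a) = (s \ del(a)) ∪ add(a)`. -/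
def StripsAction.succ {F : Type*} (a : StripsAction F) (s : Set F) : Set F :=
  (s \ a.del) ∪ a.add

/-- A sequence of STRIPS actions is applicable in a state if each action is applicable in
the state reached by its predecessors. -/
def StripsApplicable {F : Type*} : Set F → List (StripsAction F) → Prop
  | _, [] => True
  | s, a :: rest => a.Applicable s ∧ StripsApplicable (a.succ s) rest

/-- Final state of executing a sequence of STRIPS actions. -/
def StripsExec {F : Type*} : Set F → List (StripsAction F) → Set F
  | s, [] => s
  | s, a :: rest => StripsExec (a.succ s) rest

/-! ## Classical planning with conditional effects -/

/-- A set of literals over `F`, given by the fluents required true and the fluents required false. -/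
structure LitSet (F : Type*) where
  pos : Set F
  neg : Set F

/-- A set of literals holds in a state. -/
def LitSet.Holds {F : Type*} (L : LitSet F) (s : Set F) : Prop :=
  L.pos ⊆ s ∧ ∀ f ∈ L.neg, f ∉ s

/-- An action with conditional effects: a precondition (a condition on states) and a set of
conditional effects `C ▷ E`. -/
structure CondAction (F : Type*) where
  pre : Set F → Prop
  effs : Set (LitSet F × LitSet F)

/-- Applicability of a conditional-effects action. -/
def CondAction.Applicable {F : Type*} (b : CondAction F) (s : Set F) : Prop := b.pre s

/-- Successor state of a conditional-effects action: for every conditional effect whose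
condition holds, remove the fluents its effect makes false and add the fluents its effect
makes true (additions prevail over deletions). -/
def CondAction.succ {F : Type*} (b : CondAction F) (s : Set F) : Set F :=
  (s \ {f | ∃ ce ∈ b.effs, LitSet.Holds ce.1 s ∧ f ∈ ce.2.neg}) ∪
    {f | ∃ ce ∈ b.effs, LitSet.Holds ce.1 s ∧ f ∈ ce.2.pos}

/-- Applicability of a sequence of conditional-effects actions. -/
def CondApplicable {F : Type*} : Set F → List (CondAction F) → Prop
  | _, [] => True
  | s, b :: rest => b.Applicable s ∧ CondApplicable (b.succ s) rest

/-- Final state of executing a sequence of conditional-effects actions. -/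
def CondExec {F : Type*} : Set F → List (CondAction F) → Set F
  | s, [] => s
  | s, b :: rest => CondExec (b.succ s) rest

/-- A conditional-effects planning task: a set of actions, an initial state and a goal. -/
structure CondTask (F : Type*) where
  acts : Set (CondAction F)
  init : Set F
  goal : Set F

/-- A plan solves a conditional-effects planning task iff all its actions belong to the task,
it is applicable in the initial state, and the goal holds in its final state. -/
def CondTask.Solves {F : Type*} (T : CondTask F) (π : List (CondAction F)) : Prop :=
  (∀ b ∈ π, b ∈ T.acts) ∧ CondApplicable T.init π ∧ T.goal ⊆ CondExec T.init π

/-! ## Predicates, objects, ground and lifted fluents, action models -/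

/-- Ground fluents: predicates `P` (with arities `arP`) instantiated on objects `O`. -/
def GFluent (P O : Type*) (arP : P → ℕ) := Σ p : P, Fin (arP p) → O

/-- Lifted fluents: predicates `P` instantiated on the variable names `v₁, …, v_k`. -/
def VFluent (P : Type*) (arP : P → ℕ) (k : ℕ) := Σ p : P, Fin (arP p) → Fin k

/-- Ground instance `f[ω]` of a lifted fluent `f` under the binding `ω` of variable names
to objects. -/
def groundVF {P O : Type*} {arP : P → ℕ} {k : ℕ} (ω : Fin k → O) (f : VFluent P arP k) :
    GFluent P O arP := ⟨f.1, fun i => ω (f.2 i)⟩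

/-- A STRIPS operator schema of arity `k`: preconditions, positive and negative effects, all
lifted fluents mentioning only the variable names `v₁, …, v_k`. -/
structure Schema (P : Type*) (arP : P → ℕ) (k : ℕ) where
  pre : Set (VFluent P arP k)
  add : Set (VFluent P arP k)
  del : Set (VFluent P arP k)

/-- The ground STRIPS action `ξ'(ω)` obtained from a schema by substituting each variable
name `vᵢ` by the object `ωᵢ`. -/
def Schema.ground {P O : Type*} {arP : P → ℕ} {k : ℕ} (σ : Schema P arP k)
    (ω : Fin k → O) : StripsAction (GFluent P O arP) where
  pre := groundVF ω '' σ.pre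
  add := groundVF ω '' σ.add
  del := groundVF ω '' σ.del

/-- An action model over schema headers `X` (with arities `arX`): one schema per header. -/
def Model (P : Type*) (arP : P → ℕ) (X : Type*) (arX : X → ℕ) :=
  ∀ ξ : X, Schema P arP (arX ξ)

/-- A ground plan step `ξ(ω)`: a schema header together with a binding of its parameters. -/
def GroundStep (O X : Type*) (arX : X → ℕ) := Σ ξ : X, Fin (arX ξ) → O

/-- The sequence of ground STRIPS actions obtained from plan steps under an action model. -/
def groundPlan {P O X : Type*} {arP : P → ℕ} {arX : X → ℕ} (M : Model P arP X arX)
    (steps : List (GroundStep O X arX)) : List (StripsAction (GFluent P O arP)) :=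
  steps.map fun st => (M st.1).ground st.2

/-- The ground-action sequence of the steps under model `M` is applicable in `s0` and its
final state is `sn`. -/
def FollowsExample {P O X : Type*} {arP : P → ℕ} {arX : X → ℕ} (M : Model P arP X arX)
    (s0 sn : Set (GFluent P O arP)) (steps : List (GroundStep O X arX)) : Prop :=
  StripsApplicable s0 (groundPlan M steps) ∧ StripsExec s0 (groundPlan M steps) = sn

/-- The action model `M` solves the learning task `Λ = (Ψ, Σ)` with labels
`lab = ⟨(s₀ᵗ, sₙᵗ)⟩_t`: for every label there is a plan of ground actions of `M` applicable in
`s₀ᵗ` whose final state is `sₙᵗ`. -/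
def SolvesLearning {P O X : Type*} {arP : P → ℕ} {arX : X → ℕ} {τ : ℕ}
    (M : Model P arP X arX)
    (lab : Fin τ → Set (GFluent P O arP) × Set (GFluent P O arP)) : Prop :=
  ∀ t : Fin τ, ∃ steps : List (GroundStep O X arX),
    FollowsExample M (lab t).1 (lab t).2 steps

/-! ## The compiled task `P_Λ` -/

/-- Fluents of the compiled task `P_Λ`: world fluents `F`, model fluents `pre_f(ξ)`,
`del_f(ξ)`, `add_f(ξ)`, the `mode_prog` fluent and the `test_t` fluents. -/
inductive CFluent (P O X : Type*) (arP : P → ℕ) (arX : X → ℕ) (τ : ℕ) where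
  | world : GFluent P O arP → CFluent P O X arP arX τ
  | preF : (ξ : X) → VFluent P arP (arX ξ) → CFluent P O X arP arX τ
  | delF : (ξ : X) → VFluent P arP (arX ξ) → CFluent P O X arP arX τ
  | addF : (ξ : X) → VFluent P arP (arX ξ) → CFluent P O X arP arX τ
  | modeProg : CFluent P O X arP arX τ
  | test : Fin τ → CFluent P O X arP arX τ

variable {P O X : Type*} {arP : P → ℕ} {arX : X → ℕ} {τ : ℕ}

/-- `programPre_{f,ξ}`: requires `mode_prog` and `pre_f(ξ)` true and `del_f(ξ)`, `add_f(ξ)`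
false; deletes `pre_f(ξ)`. -/
def programPre (ξ : X) (f : VFluent P arP (arX ξ)) :
    CondAction (CFluent P O X arP arX τ) where
  pre s := CFluent.modeProg ∈ s ∧ CFluent.preF ξ f ∈ s ∧
    CFluent.delF ξ f ∉ s ∧ CFluent.addF ξ f ∉ s
  effs := {(⟨∅, ∅⟩, ⟨∅, {CFluent.preF ξ f}⟩)}

/-- `programEff_{f,ξ}`: requires `mode_prog` true and `del_f(ξ)`, `add_f(ξ)` false; adds
`del_f(ξ)` if `pre_f(ξ)` holds, and adds `add_f(ξ)` if `pre_f(ξ)` does not hold. -/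
def programEff (ξ : X) (f : VFluent P arP (arX ξ)) :
    CondAction (CFluent P O X arP arX τ) where
  pre s := CFluent.modeProg ∈ s ∧ CFluent.delF ξ f ∉ s ∧ CFluent.addF ξ f ∉ s
  effs := {(⟨{CFluent.preF ξ f}, ∅⟩, ⟨{CFluent.delF ξ f}, ∅⟩),
           (⟨∅, {CFluent.preF ξ f}⟩, ⟨{CFluent.addF ξ f}, ∅⟩)}

/-- `apply_{ξ,ω}`: applicable in `s` iff for every lifted fluent `f`, `pre_f(ξ) ∈ s` implies
`f[ω] ∈ s`; deletes `f[ω]` whenever `del_f(ξ) ∈ s`, adds `f[ω]` whenever `add_f(ξ) ∈ s`, and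
deletes `mode_prog`. -/
def applyAct (ξ : X) (ω : Fin (arX ξ) → O) :
    CondAction (CFluent P O X arP arX τ) where
  pre s := ∀ f : VFluent P arP (arX ξ),
    CFluent.preF ξ f ∈ s → CFluent.world (groundVF ω f) ∈ s
  effs := {ce | (∃ f : VFluent P arP (arX ξ),
                  ce = (⟨{CFluent.delF ξ f}, ∅⟩, ⟨∅, {CFluent.world (groundVF ω f)}⟩)) ∨
                (∃ f : VFluent P arP (arX ξ),
                  ce = (⟨{CFluent.addF ξ f}, ∅⟩, ⟨{CFluent.world (groundVF ω f)}, ∅⟩)) ∨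
                ce = (⟨∅, ∅⟩, ⟨∅, {CFluent.modeProg}⟩)}

/-- The initial state of the example following example `t` (for the last example, its own
final state, i.e. no change of world fluents). -/
def nextInit (lab : Fin τ → Set (GFluent P O arP) × Set (GFluent P O arP)) (t : Fin τ) :
    Set (GFluent P O arP) :=
  if h : t.1 + 1 < τ then (lab ⟨t.1 + 1, h⟩).1 else (lab t).2

/-- `validate_t`: applicable iff the world fluents equal `sₙᵗ`, `mode_prog` is false, `test_j`
holds exactly for `j < t`; adds `test_t` and replaces the world fluents `sₙᵗ` by `s₀^{t+1}`. -/
def validate (lab : Fin τ → Set (GFluent P O arP) × Set (GFluent P O arP)) (t : Fin τ) :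
    CondAction (CFluent P O X arP arX τ) where
  pre s := (∀ g, CFluent.world g ∈ s ↔ g ∈ (lab t).2) ∧ CFluent.modeProg ∉ s ∧
    (∀ j : Fin τ, CFluent.test j ∈ s ↔ j < t)
  effs := {(⟨∅, ∅⟩,
    ⟨insert (CFluent.test t) (CFluent.world '' (nextInit lab t \ (lab t).2)),
     CFluent.world '' ((lab t).2 \ nextInit lab t)⟩)}

/-- The actions `A_Λ` of the compiled task. -/
def compiledActs (lab : Fin τ → Set (GFluent P O arP) × Set (GFluent P O arP)) :
    Set (CondAction (CFluent P O X arP arX τ)) :=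
  {a | (∃ ξ f, a = programPre ξ f) ∨ (∃ ξ f, a = programEff ξ f) ∨
       (∃ ξ ω, a = applyAct ξ ω) ∨ (∃ t, a = validate lab t)}

/-- The initial state `I_Λ` of the compiled task: the world fluents of `s₀¹`, all the fluents
`pre_f(ξ)`, and `mode_prog`. -/
def compiledInit [NeZero τ]
    (lab : Fin τ → Set (GFluent P O arP) × Set (GFluent P O arP)) :
    Set (CFluent P O X arP arX τ) :=
  {c | (∃ g ∈ (lab 0).1, c = CFluent.world g) ∨ (∃ ξ f, c = CFluent.preF ξ f) ∨
       c = CFluent.modeProg}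

/-- The goal `G_Λ` of the compiled task: all the `test_t` fluents. -/
def compiledGoal : Set (CFluent P O X arP arX τ) := {c | ∃ t, c = CFluent.test t}

/-- The compiled classical planning task with conditional effects `P_Λ`. -/
def compiledTask [NeZero τ]
    (lab : Fin τ → Set (GFluent P O arP) × Set (GFluent P O arP)) :
    CondTask (CFluent P O X arP arX τ) :=
  ⟨compiledActs lab, compiledInit lab, compiledGoal⟩

/-- A state of the compiled task encodes the action model `M`. -/
def Encodes (s : Set (CFluent P O X arP arX τ)) (M : Model P arP X arX) : Prop :=
  ∀ (ξ : X) (f : VFluent P arP (arX ξ)),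
    (CFluent.preF ξ f ∈ s ↔ f ∈ (M ξ).pre) ∧
    (CFluent.delF ξ f ∈ s ↔ f ∈ (M ξ).del) ∧
    (CFluent.addF ξ f ∈ s ↔ f ∈ (M ξ).add)

/-- The action model encoded by a state of the compiled task. -/
def extractModel (s : Set (CFluent P O X arP arX τ)) : Model P arP X arX :=
  fun ξ => { pre := {f | CFluent.preF ξ f ∈ s}
             add := {f | CFluent.addF ξ f ∈ s}
             del := {f | CFluent.delF ξ f ∈ s} }

/-- A state of the compiled task encodes the world state `w` (`s ∩ F = w`). -/
def EncodesWorld (s : Set (CFluent P O X arP arX τ)) (w : Set (GFluent P O arP)) : Prop :=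
  ∀ g, CFluent.world g ∈ s ↔ g ∈ w

/-- `a` is one of the `apply_{ξ,ω}` actions. -/
def IsApplyAction (a : CondAction (CFluent P O X arP arX τ)) : Prop :=
  ∃ (ξ : X) (ω : Fin (arX ξ) → O), a = applyAct ξ ω

/-- `a` is one of the programming actions `programPre_{f,ξ}` or `programEff_{f,ξ}`. -/
def IsProgramAction (a : CondAction (CFluent P O X arP arX τ)) : Prop :=
  (∃ (ξ : X) (f : VFluent P arP (arX ξ)), a = programPre ξ f) ∨
  (∃ (ξ : X) (f : VFluent P arP (arX ξ)), a = programEff ξ f)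

/-- `c` is one of the model fluents `pre_f(ξ)`, `del_f(ξ)`, `add_f(ξ)`. -/
def IsModelFluent (c : CFluent P O X arP arX τ) : Prop :=
  (∃ ξ f, c = CFluent.preF ξ f) ∨ (∃ ξ f, c = CFluent.delF ξ f) ∨
  (∃ ξ f, c = CFluent.addF ξ f)

/-- `apply_{ξ,ω}` in closed form: its conditional effects collapse to one deletion set and one
addition set, both read off from the model fluents of the current state. -/
theorem mem_succ_applyAct {P O X : Type*} {arP : P → ℕ} {arX : X → ℕ} {τ : ℕ}
    (s : Set (CFluent P O X arP arX τ)) (ξ : X) (ω : Fin (arX ξ) → O)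
    (c : CFluent P O X arP arX τ) :
    c ∈ (applyAct ξ ω).succ s ↔
      (c ∈ s ∧ (∀ f, CFluent.delF ξ f ∈ s → c ≠ CFluent.world (groundVF ω f)) ∧
        c ≠ CFluent.modeProg) ∨
      ∃ f, CFluent.addF ξ f ∈ s ∧ c = CFluent.world (groundVF ω f) := by
  have hdel : (∃ ce ∈ (applyAct ξ ω).effs, LitSet.Holds ce.1 s ∧ c ∈ ce.2.neg) ↔
      (∃ f, CFluent.delF ξ f ∈ s ∧ c = CFluent.world (groundVF ω f)) ∨
        c = CFluent.modeProg := by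
    constructor
    · rintro ⟨ce, ⟨f, rfl⟩ | ⟨f, rfl⟩ | rfl, h, hc⟩
      · exact Or.inl ⟨f, h.1 rfl, hc⟩
      · exact hc.elim
      · exact Or.inr hc
    · rintro (⟨f, hf, hc⟩ | hc)
      · exact ⟨_, Or.inl ⟨f, rfl⟩, ⟨Set.singleton_subset_iff.2 hf, fun _ h => h.elim⟩, hc⟩
      · exact ⟨_, Or.inr (Or.inr rfl), ⟨Set.empty_subset _, fun _ h => h.elim⟩, hc⟩
  have hadd : (∃ ce ∈ (applyAct ξ ω).effs, LitSet.Holds ce.1 s ∧ c ∈ ce.2.pos) ↔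
      ∃ f, CFluent.addF ξ f ∈ s ∧ c = CFluent.world (groundVF ω f) := by
    constructor
    · rintro ⟨ce, ⟨f, rfl⟩ | ⟨f, rfl⟩ | rfl, h, hc⟩
      · exact hc.elim
      · exact ⟨f, h.1 rfl, hc⟩
      · exact hc.elim
    · rintro ⟨f, hf, hc⟩
      exact ⟨_, Or.inr (Or.inl ⟨f, rfl⟩), ⟨Set.singleton_subset_iff.2 hf, fun _ h => h.elim⟩, hc⟩
  change (c ∈ s ∧ ¬ (∃ ce ∈ (applyAct ξ ω).effs, LitSet.Holds ce.1 s ∧ c ∈ ce.2.neg)) ∨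
    (∃ ce ∈ (applyAct ξ ω).effs, LitSet.Holds ce.1 s ∧ c ∈ ce.2.pos) ↔ _
  rw [hdel, hadd]
  simp only [not_or, not_exists, not_and, ne_eq]

/-- **Backward simulation of apply actions.** Let `s` be a state of the compiled task `P_Λ`
that encodes the action model `M` and the world state `w`. If the ground STRIPS action
`ξ'(ω)` of `M` is applicable in `w`, then `apply_{ξ,ω}` is applicable in `s`, and the
successor state encodes the same action model `M` and the world state `θ(w, ξ'(ω))`. -/
theorem apply_backward_simulation
    {P O X : Type*} {arP : P → ℕ} {arX : X → ℕ} {τ : ℕ}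
    (s : Set (CFluent P O X arP arX τ)) (M : Model P arP X arX)
    (w : Set (GFluent P O arP))
    (hM : Encodes s M) (hw : EncodesWorld s w)
    (ξ : X) (ω : Fin (arX ξ) → O)
    (happ : ((M ξ).ground ω).Applicable w) :
    (applyAct ξ ω).Applicable s ∧
    Encodes ((applyAct ξ ω).succ s) M ∧
    EncodesWorld ((applyAct ξ ω).succ s) (((M ξ).ground ω).succ w) := by
  refine ⟨fun f hf => (hw _).2 (happ ⟨f, (hM ξ f).1.1 hf, rfl⟩), fun ξ' f => ?_, fun g => ?_⟩
  · obtain ⟨hp, hd, ha⟩ := hM ξ' f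
    simp [mem_succ_applyAct, hp, hd, ha]
  · have hd : (∀ f, CFluent.delF ξ f ∈ s → g ≠ groundVF ω f) ↔ g ∉ groundVF ω '' (M ξ).del := by
      simp only [(hM ξ _).2.1, Set.mem_image, not_exists, not_and, ne_eq, eq_comm]
    have ha : (∃ f, CFluent.addF ξ f ∈ s ∧ g = groundVF ω f) ↔ g ∈ groundVF ω '' (M ξ).add := by
      simp only [(hM ξ _).2.2, Set.mem_image, eq_comm]
    change _ ↔ (g ∈ w ∧ g ∉ groundVF ω '' (M ξ).del) ∨ g ∈ groundVF ω '' (M ξ).add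
    rw [← hd, ← ha, ← hw g]
    simp [mem_succ_applyAct]
end PlanLearn
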